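/- Let Λ be a noetherian ring and e ∈ Λ an idempotent. Then gldim Λ ≤ gldim(eΛe) + gldim(Λ/ΛeΛ) + pd_Λ(Λ/ΛeΛ) + 1, where pd denotes projective dimension of the left Λ-module Λ/ΛeΛ. -/

import Mathlib

open CategoryTheory
universe u
noncomputable section

/-- A linear map factors through a projective module. -/
def FactorsThroughProjective {R : Type u} [Ring R] {M N : Type u}
    [AddCommGroup M] [AddCommGroup N] [Module R M] [Module R N] (f : M →ₗ[R] N) : Prop :=
  ∃ (P : Type u) (_ : AddCommGroup P) (_ : Module R P), Module.Projective R P ∧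
    ∃ (g : M →ₗ[R] P) (h : P →ₗ[R] N), h.comp g = f

/-- `Ext^i_R(X, Y) = 0`. -/
def extZero (R : Type u) [CommRing R] (i : ℕ) (X Y : ModuleCat.{u} R) : Prop :=
  Subsingleton (((Ext R (ModuleCat.{u} R) i).obj (Opposite.op X)).obj Y)

/-- `Y` is an `n`-th syzygy of `N` (via finitely generated projective modules). -/
def IsSyzygy (R : Type u) [CommRing R] : ℕ → ModuleCat.{u} R → ModuleCat.{u} R → Prop
  | 0, Y, N => Nonempty (Y ≅ N)
  | n+1, Y, N => ∃ (P K : ModuleCat.{u} R) (i : Y ⟶ P) (p : P ⟶ K),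
      Projective P ∧ Module.Finite R P ∧ Function.Injective i ∧ Function.Surjective p ∧
      Function.Exact i p ∧ IsSyzygy R n K N

/-- projective dimension at most `n` -/
def pdLE (A : Type u) [Ring A] : ℕ → ModuleCat.{u} A → Prop
  | 0, M => Projective M
  | n+1, M => Projective M ∨ ∃ (K P : ModuleCat.{u} A) (i : K ⟶ P) (p : P ⟶ M),
      Projective P ∧ Function.Injective i ∧ Function.Surjective p ∧
      Function.Exact i p ∧ pdLE A n K

/-- global dimension at most `n` -/
def gldimLE (A : Type u) [Ring A] (n : ℕ) : Prop := ∀ M : ModuleCat.{u} A, pdLE A n M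

/-- `M` is `d`-torsionfree: it is a `d`-th syzygy of a finitely generated module `N`
with `Ext^i(N,R) = 0` for `1 ≤ i ≤ d`. -/
def IsTorsionFree (R : Type u) [CommRing R] (d : ℕ) (M : ModuleCat.{u} R) : Prop :=
  ∃ N : ModuleCat.{u} R, Module.Finite R N ∧
    (∀ i, 1 ≤ i → i ≤ d → extZero R i N (ModuleCat.of R R)) ∧ IsSyzygy R d M N

/-- `N` lies in `add M`: it is a direct summand of a finite direct sum of copies of `M`. -/
def MemAdd (R : Type u) [CommRing R] (M N : ModuleCat.{u} R) : Prop :=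
  ∃ (k : ℕ) (i : N →ₗ[R] (Fin k → M)) (p : (Fin k → M) →ₗ[R] N), p.comp i = LinearMap.id

section Corner
variable {Λ : Type u} [Ring Λ] {e : Λ}

/-- The corner `eΛe` as a non-unital subring. -/
def cornerSubring (he : IsIdempotentElem e) : NonUnitalSubring Λ where
  carrier := {x | e * x * e = x}
  zero_mem' := by simp
  add_mem' := by intro x y hx hy; simp only [Set.mem_setOf_eq] at *; rw [mul_add, add_mul, hx, hy]
  neg_mem' := by intro x hx; simp only [Set.mem_setOf_eq] at *; rw [mul_neg, neg_mul, hx]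
  mul_mem' := by
    intro x y hx hy; simp only [Set.mem_setOf_eq] at *
    have hx' : e * x = x := by
      conv_lhs => rw [← hx]
      rw [← mul_assoc, ← mul_assoc, he.eq, hx]
    have hy' : y * e = y := by
      conv_lhs => rw [← hy]
      rw [mul_assoc, he.eq, hy]
    calc e * (x * y) * e = (e * x) * (y * e) := by rw [← mul_assoc, mul_assoc]
      _ = x * y := by rw [hx', hy']

lemma corner_left (he : IsIdempotentElem e) (x : cornerSubring he) : e * (x : Λ) = x := by
  conv_lhs => rw [← x.2]
  rw [← mul_assoc, ← mul_assoc, he.eq, x.2]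

lemma corner_right (he : IsIdempotentElem e) (x : cornerSubring he) : (x : Λ) * e = x := by
  conv_lhs => rw [← x.2]
  rw [mul_assoc, he.eq, x.2]

/-- The ring structure on the corner `eΛe`, with unit `e`. -/
def cornerRing (he : IsIdempotentElem e) : Ring (cornerSubring he) :=
  { (inferInstance : NonUnitalRing (cornerSubring he)) with
    one := ⟨e, show e * e * e = e by rw [he.eq, he.eq]⟩
    one_mul := fun x => Subtype.ext (corner_left he x)
    mul_one := fun x => Subtype.ext (corner_right he x) }

end Corner

/-- The left `Λ`-module structure on the quotient of `Λ` by a two-sided ideal. -/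
def quotSpanModule (A : Type u) [Ring A] (I : TwoSidedIdeal A) :
    Module A I.ringCon.Quotient :=
  Module.compHom _ I.ringCon.mk'

/-!
The functor `M ↦ eM` from `Λ`-modules to `eΛe`-modules is exact and its kernel consists of the
modules killed by `e`, that is, of the `Λ/ΛeΛ`-modules. A resolution over `Λ/ΛeΛ` bounds the
projective dimension over `Λ` of such a module by `gldim Λ/ΛeΛ + pd_Λ Λ/ΛeΛ`.

For arbitrary `M`, take a projective `Q → eM` onto `eM`. The adjoint map `φ : Λe ⊗_{eΛe} Q → M` has
projective source, its cokernel is killed by `e`, and `e (ker φ)` is a first syzygy of `eM`. Each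
such step raises the bound on the projective dimension by one, and `eM` is reduced to `0` in
`gldim eΛe + 1` steps.
-/

/-- The projective dimension of the module `M`, in Mathlib's sense, is less than `n`. The strict
bound makes `n = 0` the zero module, so that inductions on `n` start with a trivial case. -/
abbrev PdLT (R M : Type u) [Ring R] [AddCommGroup M] [Module R M] (n : ℕ) : Prop :=
  HasProjectiveDimensionLT (ModuleCat.of R M) n

namespace PdLT

section Ring

variable {R M N : Type u} [Ring R] [AddCommGroup M] [Module R M] [AddCommGroup N] [Module R N]
  {m n : ℕ}

lemma mono (_ : PdLT R M m) (hmn : m ≤ n) : PdLT R M n :=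
  hasProjectiveDimensionLT_of_ge _ m n hmn

lemma zero_iff : PdLT R M 0 ↔ Subsingleton M := by
  rw [PdLT, hasProjectiveDimensionLT_zero_iff_isZero, ModuleCat.isZero_iff_subsingleton]

lemma one_iff : PdLT R M 1 ↔ Module.Projective R M := by
  rw [PdLT, ← projective_iff_hasProjectiveDimensionLT_one, ← IsProjective.iff_projective]

lemma of_projective [Module.Projective R M] : PdLT R M (n + 1) :=
  (one_iff.2 ‹_›).mono (by lia)

lemma of_retract (_ : PdLT R N n) (i : M →ₗ[R] N) (r : N →ₗ[R] M)
    (hri : r ∘ₗ i = LinearMap.id) : PdLT R M n :=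
  Retract.hasProjectiveDimensionLT (Y := ModuleCat.of R N)
    { i := ModuleCat.ofHom i
      r := ModuleCat.ofHom r
      retract := ModuleCat.hom_ext hri } n

lemma of_linearEquiv (h : PdLT R N n) (f : M ≃ₗ[R] N) : PdLT R M n :=
  h.of_retract f f.symm (by ext; simp)

section Surjective

variable {g : M →ₗ[R] N} (hg : Function.Surjective g)
include hg

lemma ker_of_surjective (hM : PdLT R M n) (hN : PdLT R N (n + 1)) :
    PdLT R (LinearMap.ker g) n :=
  (LinearMap.shortExact_shortComplexKer hg).hasProjectiveDimensionLT_X₁ n hM hN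

lemma of_ker (hK : PdLT R (LinearMap.ker g) n) (hM : PdLT R M (n + 1)) : PdLT R N (n + 1) :=
  (LinearMap.shortExact_shortComplexKer hg).hasProjectiveDimensionLT_X₃ n hK hM

lemma of_ker_of_codomain (hK : PdLT R (LinearMap.ker g) n) (hN : PdLT R N n) : PdLT R M n :=
  (LinearMap.shortExact_shortComplexKer hg).hasProjectiveDimensionLT_X₂ n hK hN

end Surjective

lemma of_exact {K : Type u} [AddCommGroup K] [Module R K] {i : K →ₗ[R] M} {g : M →ₗ[R] N}
    (hi : Function.Injective i) (hg : Function.Surjective g) (hig : Function.Exact i g)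
    (hK : PdLT R K n) (hM : PdLT R M (n + 1)) : PdLT R N (n + 1) :=
  of_ker hg (hK.of_linearEquiv
    ((LinearEquiv.ofEq _ _ hig.linearMap_ker_eq).trans (LinearEquiv.ofInjective i hi).symm)) hM

lemma of_submodule_of_quotient {S : Submodule R M} (hS : PdLT R S n) (hQ : PdLT R (M ⧸ S) n) :
    PdLT R M n :=
  of_ker_of_codomain S.mkQ_surjective (S.ker_mkQ.symm ▸ hS) hQ

lemma exists_projective_surjective (h : PdLT R M (n + 1)) :
    ∃ (P : ModuleCat.{u} R) (g : P →ₗ[R] M),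
      Module.Projective R P ∧ Function.Surjective g ∧ PdLT R (LinearMap.ker g) n := by
  cases n with
  | zero =>
    refine ⟨ModuleCat.of R M, LinearMap.id, one_iff.1 h, Function.surjective_id, ?_⟩
    rw [LinearMap.ker_id, zero_iff]
    infer_instance
  | succ n =>
    have hg := Finsupp.linearCombination_id_surjective R M
    exact ⟨ModuleCat.of R (M →₀ R), Finsupp.linearCombination R id, inferInstance, hg,
      ker_of_surjective hg of_projective h⟩

lemma dfinsupp {ι : Type u} {A : ι → Type u} [∀ i, AddCommGroup (A i)] [∀ i, Module R (A i)]
    (h : ∀ i, PdLT R (A i) n) : PdLT R (Π₀ i, A i) n := by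
  induction n generalizing A with
  | zero =>
    have (i : ι) : Subsingleton (A i) := zero_iff.1 (h i)
    exact zero_iff.2 inferInstance
  | succ n ih =>
    choose P g hP hg hK using fun i => (h i).exists_projective_surjective
    refine of_exact (i := DFinsupp.mapRange.linearMap fun i => (LinearMap.ker (g i)).subtype)
      (g := DFinsupp.mapRange.linearMap g)
      ((DFinsupp.mapRange_injective _ fun _ => map_zero _).2 fun _ => Subtype.val_injective)
      ((DFinsupp.mapRange_surjective _ fun _ => map_zero _).2 hg) ?_ (ih hK) of_projective
    rw [LinearMap.exact_iff, DFinsupp.ker_mapRangeLinearMap, DFinsupp.range_mapRangeLinearMap]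
    simp only [Submodule.range_subtype]

lemma finsupp (ι : Type u) (h : PdLT R M n) : PdLT R (ι →₀ M) n := by
  classical
  exact (dfinsupp fun _ : ι => h).of_linearEquiv (finsuppLequivDFinsupp R)

end Ring

section RestrictScalars

variable {R C N : Type u} [Ring R] [Ring C] [Module R C] [IsScalarTower R C C]
  [AddCommGroup N] [Module C N] [Module R N] [IsScalarTower R C N] {m n : ℕ}

lemma restrictScalars_of_projective [Module.Projective C N] (hC : PdLT R C n) : PdLT R N n := by
  obtain ⟨s, hs⟩ := Module.projective_def'.1 ‹Module.Projective C N›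
  exact (hC.finsupp N).of_retract (s.restrictScalars R)
    ((Finsupp.linearCombination C id).restrictScalars R)
    (LinearMap.ext fun x => LinearMap.congr_fun hs x)

lemma restrictScalars (hC : PdLT R C (m + 1)) (hN : PdLT C N n) : PdLT R N (n + m) := by
  induction n generalizing N with
  | zero =>
    have := zero_iff.1 hN
    exact (zero_iff.2 this).mono (Nat.zero_le _)
  | succ n ih =>
    obtain ⟨P, g, hP, hg, hK⟩ := hN.exists_projective_surjective
    let : Module R P := Module.compHom P (RingHom.smulOneHom : R →+* C)
    have : IsScalarTower R C P := ⟨fun r c x => by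
      change (r • c) • x = (r • (1 : C)) • c • x
      rw [smul_smul, smul_one_mul]⟩
    have hP : PdLT R P (n + m + 1) := (restrictScalars_of_projective hC).mono (by lia)
    exact (of_exact (i := (LinearMap.ker g).subtype.restrictScalars R) (g := g.restrictScalars R)
      Subtype.val_injective hg g.exact_subtype_ker_map (ih hK) hP).mono (by lia)

end RestrictScalars

end PdLT

lemma pdLE_iff_pdLT {R : Type u} [Ring R] {n : ℕ} {M : ModuleCat.{u} R} :
    pdLE R n M ↔ PdLT R M (n + 1) := by
  induction n generalizing M with
  | zero => exact projective_iff_hasProjectiveDimensionLT_one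
  | succ n ih =>
    constructor
    · rintro (hM | ⟨K, P, i, p, hP, hi, hp, hip, hK⟩)
      · have := (IsProjective.iff_projective (R := R) M).2 hM
        exact PdLT.of_projective
      · have := (IsProjective.iff_projective (R := R) P).2 hP
        exact PdLT.of_exact (i := i.hom) (g := p.hom) hi hp hip (ih.1 hK) PdLT.of_projective
    · intro h
      obtain ⟨P, g, hP, hg, hK⟩ := h.exists_projective_surjective
      exact .inr ⟨.of R (LinearMap.ker g), P, ModuleCat.ofHom (LinearMap.ker g).subtype,
        ModuleCat.ofHom g, (IsProjective.iff_projective (R := R) P).1 hP,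
        Subtype.val_injective, hg, LinearMap.exact_subtype_ker_map g, ih.2 hK⟩

/-- The ring `eΛe`. The type synonym hides the non-unital ring structure that `cornerSubring he`
carries as a subring, leaving `cornerRing he` as its only ring structure. -/
def Corner {Λ : Type*} [Ring Λ] {e : Λ} (he : IsIdempotentElem e) : Type _ :=
  cornerSubring he

namespace Corner

variable {Λ : Type u} [Ring Λ] {e : Λ} {he : IsIdempotentElem e}

instance : Ring (Corner he) := cornerRing he

/-- The inclusion of `eΛe` in `Λ`, which does not preserve the unit. -/
def incl (he : IsIdempotentElem e) : Corner he →ₙ+* Λ where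
  toFun := Subtype.val
  map_mul' _ _ := rfl
  map_zero' := rfl
  map_add' _ _ := rfl

lemma incl_injective : Function.Injective (incl he) := Subtype.val_injective

lemma mul_incl (b : Corner he) : e * incl he b = incl he b := corner_left he b

/-- The element `exe` of the corner `eΛe`. -/
def compress (he : IsIdempotentElem e) (x : Λ) : Corner he :=
  ⟨e * x * e, show e * (e * x * e) * e = e * x * e by
    rw [← mul_assoc, ← mul_assoc, he.eq, mul_assoc, he.eq]⟩

end Corner

/-- The additive group `eM`, for `e` idempotent, encoded as the fixed points of multiplication
by `e`. It is a module over the corner `eΛe`. -/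
def cornerPart {Λ : Type*} [Ring Λ] (e : Λ) (M : Type*) [AddCommGroup M] [Module Λ M] :
    AddSubgroup M :=
  (DistribSMul.toAddMonoidHom M e).eqLocus (.id M)

namespace cornerPart

variable {Λ : Type u} [Ring Λ] {e : Λ} {he : IsIdempotentElem e}
  {M N Q X : Type u} [AddCommGroup M] [Module Λ M] [AddCommGroup N] [Module Λ N]
  [AddCommGroup Q] [Module (Corner he) Q]

lemma smul_coe (m : cornerPart e M) : e • (m : M) = m := m.2

lemma smul_mem (he : IsIdempotentElem e) (m : M) : e • m ∈ cornerPart e M := by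
  change e • e • m = e • m
  rw [smul_smul, he.eq]

instance : Module (Corner he) (cornerPart e M) where
  smul b m := ⟨Corner.incl he b • (m : M), by
    change e • Corner.incl he b • (m : M) = Corner.incl he b • (m : M)
    rw [smul_smul, Corner.mul_incl]⟩
  one_smul m := Subtype.ext m.2
  mul_smul b c m := Subtype.ext (by
    change Corner.incl he (b * c) • (m : M) = _
    rw [map_mul, mul_smul]; rfl)
  smul_zero b := Subtype.ext (smul_zero (Corner.incl he b))
  smul_add b m m' := Subtype.ext (smul_add (Corner.incl he b) (m : M) (m' : M))
  add_smul b c m := Subtype.ext (by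
    change Corner.incl he (b + c) • (m : M) = _
    rw [map_add, add_smul]; rfl)
  zero_smul m := Subtype.ext (by
    change Corner.incl he 0 • (m : M) = _
    rw [map_zero, zero_smul]; rfl)

lemma coe_smul (b : Corner he) (m : cornerPart e M) :
    ((b • m : cornerPart e M) : M) = Corner.incl he b • (m : M) := rfl

/-- The functor `M ↦ eM` on morphisms. -/
def map (he : IsIdempotentElem e) (φ : M →ₗ[Λ] N) :
    cornerPart e M →ₗ[Corner he] cornerPart e N where
  toFun m := ⟨φ m, (φ.map_smul e m).symm.trans (congrArg φ (smul_coe m))⟩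
  map_add' m m' := Subtype.ext (φ.map_add m m')
  map_smul' b m := Subtype.ext (φ.map_smul (Corner.incl he b) m)

/-- The functor `M ↦ eM` preserves kernels. -/
def kerEquiv (he : IsIdempotentElem e) (φ : M →ₗ[Λ] N) :
    cornerPart e (LinearMap.ker φ) ≃ₗ[Corner he] LinearMap.ker (map he φ) where
  toFun x := ⟨⟨x, congrArg Subtype.val (smul_coe x)⟩, Subtype.ext x.1.2⟩
  map_add' _ _ := rfl
  map_smul' _ _ := rfl
  invFun y := ⟨⟨y, congrArg Subtype.val y.2⟩, Subtype.ext (smul_coe y.1)⟩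

/-- The inclusion of a free `eΛe`-module in the free `Λ`-module on the same basis. -/
def ofFinsupp (he : IsIdempotentElem e) (X : Type u) :
    (X →₀ Corner he) →ₗ[Corner he] cornerPart e (X →₀ Λ) where
  toFun g := ⟨g.mapRange (Corner.incl he) (map_zero _),
    Finsupp.ext fun x => Corner.mul_incl (g x)⟩
  map_add' g h := Subtype.ext (Finsupp.ext fun x => map_add (Corner.incl he) (g x) (h x))
  map_smul' b g := Subtype.ext (Finsupp.ext fun x => map_mul (Corner.incl he) b (g x))

lemma coe_ofFinsupp (g : X →₀ Corner he) :
    (ofFinsupp he X g : X →₀ Λ) = g.mapRange (Corner.incl he) (map_zero _) := rfl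

lemma ofFinsupp_injective : Function.Injective (ofFinsupp he X) := fun _ _ h =>
  Finsupp.mapRange_injective _ (map_zero _) Corner.incl_injective (Subtype.ext_iff.1 h)

lemma linearCombination_ofFinsupp (f : X → cornerPart e M) (g : X →₀ Corner he) :
    Finsupp.linearCombination Λ (fun x => (f x : M)) (ofFinsupp he X g : X →₀ Λ) =
      (Finsupp.linearCombination (Corner he) f g : M) := by
  change _ = (cornerPart e M).subtype _
  rw [coe_ofFinsupp, Finsupp.linearCombination_apply, Finsupp.linearCombination_apply,
    map_finsuppSum, Finsupp.sum_mapRange_index (by simp)]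
  rfl

lemma exists_eq_smul_of_mem_span (f : Q →ₗ[Corner he] cornerPart e M) {y : M}
    (hy : y ∈ Submodule.span Λ (Set.range fun q => (f q : M))) : ∃ q, (f q : M) = e • y := by
  obtain ⟨c, rfl⟩ := Finsupp.mem_span_range_iff_exists_finsupp.1 hy
  refine ⟨c.sum fun q x => Corner.compress he x • q, ?_⟩
  change (cornerPart e M).subtype _ = _
  rw [map_finsuppSum, map_finsuppSum, Finsupp.smul_sum]
  refine Finsupp.sum_congr fun q _ => ?_
  calc ((f (Corner.compress he (c q) • q) : cornerPart e M) : M)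
      = (e * c q * e) • (f q : M) := by rw [map_smul, coe_smul]; rfl
    _ = e • c q • (f q : M) := by rw [mul_smul, smul_coe, mul_smul]

/-- An `eΛe`-linear map `Q → eM`, with codomain restricted to `eS` for `S` the `Λ`-submodule of
`M` spanned by its image. -/
def spanCodRestrict (f : Q →ₗ[Corner he] cornerPart e M) :
    Q →ₗ[Corner he] cornerPart e (Submodule.span Λ (Set.range fun q => (f q : M))) where
  toFun q := ⟨⟨f q, Submodule.subset_span ⟨q, rfl⟩⟩, Subtype.ext (smul_coe (f q))⟩
  map_add' q r := by simp only [map_add]; rfl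
  map_smul' b q := by simp only [map_smul]; rfl

lemma spanCodRestrict_bijective {f : Q →ₗ[Corner he] cornerPart e M} (hf : Function.Injective f) :
    Function.Bijective (spanCodRestrict f) := by
  refine ⟨fun q r h => hf (Subtype.ext ?_), fun y => ?_⟩
  · exact congrArg (fun x => (x.1 : M)) h
  · obtain ⟨q, hq⟩ := exists_eq_smul_of_mem_span f y.1.2
    exact ⟨q, Subtype.ext (Subtype.ext (hq.trans (congrArg Subtype.val (smul_coe y))))⟩

section Projective

variable {s : Q →ₗ[Corner he] Q →₀ Corner he}
  (hs : Finsupp.linearCombination (Corner he) id ∘ₗ s = LinearMap.id)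
include hs

lemma linearCombination_ofFinsupp_section (f : Q →ₗ[Corner he] cornerPart e M) (q : Q) :
    Finsupp.linearCombination Λ (fun x => (f x : M)) (ofFinsupp he Q (s q) : Q →₀ Λ) = f q := by
  rw [linearCombination_ofFinsupp, ← Finsupp.apply_linearCombination_id]
  exact congrArg (fun x => (f x : M)) (LinearMap.congr_fun hs q)

lemma projective_span_ofFinsupp_section :
    Module.Projective Λ (Submodule.span Λ
      (Set.range fun q => (ofFinsupp he Q (s q) : Q →₀ Λ))) := by
  let σ (q : Q) : Q →₀ Λ := ofFinsupp he Q (s q)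
  let π : (Q →₀ Λ) →ₗ[Λ] Submodule.span Λ (Set.range σ) :=
    (Finsupp.linearCombination Λ σ).codRestrict _ fun x => by
      rw [← Finsupp.range_linearCombination]
      exact LinearMap.mem_range_self _ x
  have hπ (x : Submodule.span Λ (Set.range σ)) : Finsupp.linearCombination Λ σ x = x :=
    LinearMap.eqOn_span (f := Finsupp.linearCombination Λ σ) (g := LinearMap.id)
      (Set.forall_mem_range.2 (linearCombination_ofFinsupp_section hs (ofFinsupp he Q ∘ₗ s))) x.2
  exact .of_split (Submodule.subtype _) π (LinearMap.ext fun x => Subtype.ext (hπ x))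

end Projective

/- The witness is `Λe ⊗_{eΛe} Q`. A splitting of `eΛe^(Q) → Q` embeds `Q` in `e(Λ^(Q))`, and the
tensor product is realised as the `Λ`-submodule of `Λ^(Q)` spanned by the image of `Q`. -/
lemma exists_projective_map_comp_eq [Module.Projective (Corner he) Q]
    (f : Q →ₗ[Corner he] cornerPart e M) :
    ∃ (P : ModuleCat.{u} Λ) (φ : P →ₗ[Λ] M) (ι : Q ≃ₗ[Corner he] cornerPart e P),
      Module.Projective Λ P ∧ map he φ ∘ₗ ι.toLinearMap = f := by
  obtain ⟨s, hs⟩ := Module.projective_def'.1 ‹Module.Projective (Corner he) Q›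
  have hσ : Function.Injective (ofFinsupp he Q ∘ₗ s) :=
    ofFinsupp_injective.comp (LinearMap.injective_of_comp_eq_id _ _ hs)
  let σ := ofFinsupp he Q ∘ₗ s
  let P := Submodule.span Λ (Set.range fun q => (σ q : Q →₀ Λ))
  let φ : P →ₗ[Λ] M := Finsupp.linearCombination Λ (fun x => (f x : M)) ∘ₗ P.subtype
  let ι : Q ≃ₗ[Corner he] cornerPart e P := .ofBijective _ (spanCodRestrict_bijective hσ)
  exact ⟨.of Λ P, φ, ι, projective_span_ofFinsupp_section hs,
    LinearMap.ext fun q => Subtype.ext (linearCombination_ofFinsupp_section hs f q)⟩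

end cornerPart

theorem PdLT.of_cornerPart {Λ M : Type u} [Ring Λ] [AddCommGroup M] [Module Λ M] {e : Λ}
    (he : IsIdempotentElem e) {c n : ℕ}
    (hc : ∀ (N : Type u) [AddCommGroup N] [Module Λ N], (∀ x : N, e • x = 0) → PdLT Λ N c)
    (hM : PdLT (Corner he) (cornerPart e M) n) : PdLT Λ M (n + c) := by
  induction n generalizing M with
  | zero =>
    have := PdLT.zero_iff.1 hM
    have hkilled (x : M) : e • x = 0 := congrArg Subtype.val
      (Subsingleton.elim ⟨e • x, cornerPart.smul_mem he x⟩ (0 : cornerPart e M))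
    exact (hc M hkilled).mono (by lia)
  | succ n ih =>
    obtain ⟨Q, f, hQ, hf, hfker⟩ := hM.exists_projective_surjective
    obtain ⟨P, φ, ι, hP, rfl⟩ := cornerPart.exists_projective_map_comp_eq f
    have hker : PdLT Λ (LinearMap.ker φ) (n + c) :=
      ih (hfker.of_linearEquiv
        ((cornerPart.kerEquiv he φ).trans (ι.ofSubmodule' (LinearMap.ker _)).symm))
    have hrange : PdLT Λ (LinearMap.range φ) (n + c + 1) :=
      .of_ker φ.surjective_rangeRestrict (by rwa [φ.ker_rangeRestrict]) .of_projective
    have hcoker : PdLT Λ (M ⧸ LinearMap.range φ) c := hc _ fun x => by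
      obtain ⟨m, rfl⟩ := Submodule.mkQ_surjective _ x
      obtain ⟨q, hq⟩ := hf ⟨e • m, cornerPart.smul_mem he m⟩
      exact (Submodule.Quotient.mk_eq_zero _).2 ⟨ι q, congrArg Subtype.val hq⟩
    exact (PdLT.of_submodule_of_quotient hrange (hcoker.mono (by lia))).mono (by lia)

/-- The action on a `Λ`-module of the quotient of `Λ` by a two-sided ideal annihilating it. -/
abbrev quotientModule {Λ N : Type u} [Ring Λ] [AddCommGroup N] [Module Λ N] {I : TwoSidedIdeal Λ}
    (hI : I ≤ TwoSidedIdeal.ker (Module.toAddMonoidEnd Λ N)) : Module I.ringCon.Quotient N :=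
  Module.compHom N (RingCon.lift I.ringCon (Module.toAddMonoidEnd Λ N)
    (TwoSidedIdeal.ringCon_le_iff.1 hI))

lemma PdLT.of_gldimLE_quotient {Λ N : Type u} [Ring Λ] [AddCommGroup N] [Module Λ N]
    {I : TwoSidedIdeal Λ} {b p : ℕ} (hI : I ≤ TwoSidedIdeal.ker (Module.toAddMonoidEnd Λ N))
    (hb : gldimLE I.ringCon.Quotient b)
    (hp : @PdLT Λ I.ringCon.Quotient _ _ (quotSpanModule Λ I) (p + 1)) :
    PdLT Λ N (b + 1 + p) := by
  let : Module Λ I.ringCon.Quotient := quotSpanModule Λ I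
  -- Shadows the scalar action of `RingCon.Quotient`, which is not definitionally this one.
  let : SMul Λ I.ringCon.Quotient := (quotSpanModule Λ I).toSMul
  let : Module I.ringCon.Quotient N := quotientModule hI
  have : IsScalarTower Λ I.ringCon.Quotient I.ringCon.Quotient :=
    ⟨fun x => mul_assoc (I.ringCon.mk' x)⟩
  have : IsScalarTower Λ I.ringCon.Quotient N := ⟨fun x y n => mul_smul (I.ringCon.mk' x) y n⟩
  exact hp.restrictScalars (pdLE_iff_pdLT.1 (hb (.of _ N)))

theorem stmt11_general (Λ : Type u) [Ring Λ] (e : Λ) (he : IsIdempotentElem e) (a b p : ℕ)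
    (ha : @gldimLE (cornerSubring he) (cornerRing he) a)
    (hb : gldimLE (TwoSidedIdeal.span ({e} : Set Λ)).ringCon.Quotient b)
    (hp : pdLE Λ p
      (@ModuleCat.of Λ _ (TwoSidedIdeal.span ({e} : Set Λ)).ringCon.Quotient _
        (quotSpanModule _ _))) :
    gldimLE Λ (a + b + p + 1) := by
  have hkilled (N : Type u) [AddCommGroup N] [Module Λ N] (hN : ∀ x : N, e • x = 0) :
      PdLT Λ N (b + 1 + p) :=
    .of_gldimLE_quotient
      (TwoSidedIdeal.span_le.2 (Set.singleton_subset_iff.2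
        ((TwoSidedIdeal.mem_ker _).2 (AddMonoidHom.ext hN)))) hb (pdLE_iff_pdLT.1 hp)
  intro M
  have hcorner : PdLT (Corner he) (cornerPart e M) (a + 1) :=
    (pdLE_iff_pdLT (R := Corner he)).1 (ha (ModuleCat.of (Corner he) (cornerPart e M)))
  exact pdLE_iff_pdLT.2 ((hcorner.of_cornerPart he hkilled).mono (by lia))

/-- Auslander–Platzeck–Todorov: for a noetherian ring `Λ` and an idempotent `e`,
`gldim Λ ≤ gldim eΛe + gldim Λ/ΛeΛ + pd_Λ(Λ/ΛeΛ) + 1`. -/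
theorem stmt11 (Λ : Type u) [Ring Λ] [IsNoetherianRing Λ]
    (e : Λ) (he : IsIdempotentElem e)
    (a b p : ℕ)
    (ha : @gldimLE (cornerSubring he) (cornerRing he) a)
    (hb : gldimLE (TwoSidedIdeal.span ({e} : Set Λ)).ringCon.Quotient b)
    (hp : pdLE Λ p
      (@ModuleCat.of Λ _ (TwoSidedIdeal.span ({e} : Set Λ)).ringCon.Quotient _
        (quotSpanModule _ _))) :
    gldimLE Λ (a + b + p + 1) :=
  stmt11_general Λ e he a b p ha hb hp
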